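/- (Matrix-Tree Theorem for graphs) Let G be a finite simple undirected graph on n vertices with adjacency matrix A and diagonal degree matrix D, and set L = A − D. Then the number of spanning trees of G equals the absolute value of any cofactor of L. -/

import Mathlib

open scoped Classical

/-- The (i,j) cofactor of a square matrix. -/
noncomputable def cofactor {n : ℕ} (L : Matrix (Fin (n + 1)) (Fin (n + 1)) ℝ)
    (i j : Fin (n + 1)) : ℝ :=
  (-1 : ℝ) ^ ((i : ℕ) + (j : ℕ)) * (L.submatrix i.succAbove j.succAbove).det

/-!
The cofactors of the Laplacian `D - A` are the entries of its adjugate. As the rows sum to zero,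
these depend only on the deleted row `r`, so they equal the determinant of the Laplacian with row
`r` replaced by the basis vector `e r`. Row `v ≠ r` is the sum of `e v - e w` over the neighbours
`w` of `v`, so multilinearity turns the determinant into a sum over the ways `f` of choosing a
neighbour `f v` of every `v ≠ r`. The term of `f` is `1` if following `f` leads from every vertex to
`r`, because the matrix is then unitriangular for the order given by `f`, and `0` otherwise, because
the indicator of the vertices that do not lead to `r` is in the kernel. Directing the edges of a
spanning tree towards `r` identifies spanning trees with the choices of the first kind.
-/

open Finset Matrix

section Determinant

variable {ι R : Type*} [Fintype ι] [DecidableEq ι] [CommRing R]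

lemma det_one_sub_eq_one_of_forall_le {α : Type*} [LinearOrder α] {M : Matrix ι ι R} (b : ι → α)
    (hM : ∀ i j, b j ≤ b i → M i j = 0) : (1 - M).det = 1 := by
  have htri : (1 - M).BlockTriangular b := fun i j hij => by
    rw [Matrix.sub_apply, one_apply_ne (ne_of_apply_ne b hij.ne'), hM i j hij.le, sub_zero]
  have hblock (a : α) : (1 - M).toSquareBlock b a = 1 := by
    ext i j
    simp [toSquareBlock_def, hM i j (j.2.trans i.2.symm).le, one_apply, Subtype.ext_iff]
  simp [htri.det, hblock]

lemma adjugate_apply_eq_of_mulVec_one_eq_zero {M : Matrix ι ι R} (hM : M *ᵥ 1 = 0) (i i' j : ι) :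
    M.adjugate i j = M.adjugate i' j := by
  have hker : M.updateRow j (Pi.single i 1 - Pi.single i' 1) *ᵥ 1 = 0 := by
    funext k
    obtain rfl | hk := eq_or_ne k j
    · simp [mulVec, dotProduct]
    · simpa [mulVec, updateRow_ne hk] using congrFun hM k
  have hdet := det_eq_zero_of_mulVec_eq_zero_of_mem_nonZeroDivisors hker (i := j) (one_mem _)
  rw [sub_eq_add_neg, det_updateRow_add, ← neg_one_smul R, det_updateRow_smul, neg_one_mul,
    ← sub_eq_add_neg, sub_eq_zero] at hdet
  simpa only [adjugate_apply] using hdet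

lemma cofactor_eq_adjugate {n : ℕ} (M : Matrix (Fin (n + 1)) (Fin (n + 1)) ℝ) (i j : Fin (n + 1)) :
    cofactor M i j = M.adjugate j i :=
  (adjugate_fin_succ_eq_det_submatrix M j i).symm

end Determinant

section ParentMap

variable {V : Type*} {f g : V → Option V} {r v w : V}

/-- A map `f : V → Option V` is read as a parent function, with `f v = none` when `v` is a root;
`IsParent f w v` says that `w` is the parent of `v`. The relation goes from parents to children, so
that it is well-founded when every vertex has a root among its iterated parents. -/
def IsParent (f : V → Option V) (w v : V) : Prop := f v = some w

/-- The graph underlying a parent function: it joins each vertex to its parent, if they differ. -/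
def parentGraph (f : V → Option V) : SimpleGraph V := SimpleGraph.fromRel (IsParent f)

lemma parentGraph_adj :
    (parentGraph f).Adj v w ↔ v ≠ w ∧ (IsParent f v w ∨ IsParent f w v) :=
  SimpleGraph.fromRel_adj ..

lemma parentGraph_le {G : SimpleGraph V} (h : ∀ v w, IsParent f w v → G.Adj v w) :
    parentGraph f ≤ G := fun v w hvw =>
  (parentGraph_adj.1 hvw).2.elim (fun hv => (h w v hv).symm) (h v w)

lemma IsParent.ne (hf : WellFounded (IsParent f)) (h : IsParent f w v) : v ≠ w := by
  rintro rfl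
  exact hf.asymmetric _ _ h h

lemma IsParent.adj (hf : WellFounded (IsParent f)) (h : IsParent f w v) :
    (parentGraph f).Adj v w :=
  parentGraph_adj.2 ⟨h.ne hf, Or.inr h⟩

lemma acc_isParent_of_eq_none (h : f v = none) : Acc (IsParent f) v :=
  ⟨v, fun w hw => by simp [IsParent, h] at hw⟩

lemma IsParent.acc_iff (h : IsParent f w v) : Acc (IsParent f) v ↔ Acc (IsParent f) w :=
  ⟨fun hv => hv.inv h, fun hw => ⟨v, fun _ hu => Option.some_injective _ (h.symm.trans hu) ▸ hw⟩⟩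

lemma connected_parentGraph (hf : WellFounded (IsParent f)) (hr : ∀ v, f v = none → v = r) :
    (parentGraph f).Connected := by
  have hreach (v : V) : (parentGraph f).Reachable v r := by
    induction v using hf.induction with
    | _ v ih =>
      cases hv : f v with
      | none => rw [hr v hv]
      | some w => exact (IsParent.adj hf hv).reachable.trans (ih w hv)
  have : Nonempty V := ⟨r⟩
  exact ⟨fun v w => (hreach v).trans (hreach w).symm⟩

lemma isTree_parentGraph [Finite V] (hf : WellFounded (IsParent f))
    (hr : ∀ v, f v = none ↔ v = r) : (parentGraph f).IsTree := by
  have hconn := connected_parentGraph hf fun v => (hr v).1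
  have hedge : (parentGraph f).edgeSet ⊆ (fun v => s(v, (f v).getD v)) '' {r}ᶜ := by
    have hmem {v w : V} (h : IsParent f w v) : s(v, w) ∈ (fun v => s(v, (f v).getD v)) '' {r}ᶜ :=
      ⟨v, fun hv => by simp [(hr v).2 hv, IsParent] at h, congrArg (s(v, ·.getD v)) h⟩
    intro e he
    induction e with
    | _ v w =>
      obtain hv | hw := (parentGraph_adj.1 he).2
      · exact Sym2.eq_swap (a := v) ▸ hmem hv
      · exact hmem hw
  have hcard : (parentGraph f).edgeSet.ncard ≤ ({r}ᶜ : Set V).ncard :=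
    (Set.ncard_le_ncard hedge).trans Set.ncard_image_le
  have hcompl := Set.ncard_add_ncard_compl {r}
  rw [Set.ncard_singleton] at hcompl
  refine SimpleGraph.isTree_iff_connected_and_card.2
    ⟨hconn, hconn.card_vert_le_card_edgeSet_add_one.antisymm' ?_⟩
  rw [Nat.card_coe_set_eq]
  lia

lemma eq_of_parentGraph_eq (hf : WellFounded (IsParent f)) (hroot : ∀ v, f v = none → g v = none)
    (h : parentGraph f = parentGraph g) : f = g := by
  funext v
  induction v using hf.induction with
  | _ v ih =>
    cases hv : f v with
    | none => exact (hroot v hv).symm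
    | some w =>
      obtain hw | hw := (parentGraph_adj.1 (h ▸ IsParent.adj hf hv)).2
      · exact absurd ((ih w hv).trans hw) (hf.asymmetric _ _ hv)
      · exact hw.symm

lemma exists_parentGraph_eq_of_isTree {T : SimpleGraph V} (hT : T.IsTree) (r : V) :
    ∃ f, WellFounded (IsParent f) ∧ (∀ v, f v = none ↔ v = r) ∧ parentGraph f = T := by
  have hcloser (v : V) (hv : v ≠ r) : ∃ w, T.Adj v w ∧ T.dist w r < T.dist v r := by
    obtain ⟨p, hp⟩ := hT.connected.exists_walk_length_eq_dist v r
    cases p with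
    | nil => exact absurd rfl hv
    | cons hadj p => exact ⟨_, hadj, (SimpleGraph.dist_le p).trans_lt (by simp [← hp])⟩
  choose! c hadj hdist using hcloser
  let f (v : V) : Option V := if v = r then none else some (c v)
  have hroot (v : V) : f v = none ↔ v = r := by simp [f]
  have hparent {v w : V} (h : IsParent f w v) : v ≠ r ∧ c v = w := by simpa [IsParent, f] using h
  have hf : WellFounded (IsParent f) :=
    Subrelation.wf (fun h => (hparent h).2 ▸ hdist _ (hparent h).1) (measure (T.dist · r)).wf
  have hle : parentGraph f ≤ T :=
    parentGraph_le fun v w h => (hparent h).2 ▸ hadj v (hparent h).1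
  have hconn := connected_parentGraph hf fun v => (hroot v).1
  exact ⟨f, hf, hroot,
    hle.antisymm ((SimpleGraph.isTree_iff_minimal_connected.1 hT).le_of_le hconn hle)⟩

end ParentMap

section ParentMatrix

variable {V : Type*} [DecidableEq V]

/-- The 0-1 matrix of a parent function: row `v` has its `1` in the column of the parent of `v`, and
is zero when `v` is a root. -/
def parentMatrix (R : Type*) [Zero R] [One R] (f : V → Option V) : Matrix V V R :=
  Matrix.of fun v => (f v).elim 0 (Pi.single · 1)

variable [Fintype V] {R : Type*}

lemma parentMatrix_mulVec_apply [NonAssocSemiring R] (f : V → Option V) (x : V → R) (v : V) :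
    (parentMatrix R f *ᵥ x) v = (f v).elim 0 x := by
  cases hv : f v <;> simp [parentMatrix, mulVec, hv]

variable [CommRing R] {f : V → Option V}

lemma det_one_sub_parentMatrix_of_wellFounded (hf : WellFounded (IsParent f)) :
    (1 - parentMatrix R f).det = 1 := by
  have : IsWellFounded V (IsParent f) := ⟨hf⟩
  refine det_one_sub_eq_one_of_forall_le
    (fun v => OrderDual.toDual (IsWellFounded.rank (IsParent f) v)) fun v w hle => ?_
  cases hv : f v with
  | none => simp [parentMatrix, hv]
  | some u =>
    have huw : w ≠ u := by
      rintro rfl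
      exact (IsWellFounded.rank_lt_of_rel (r := IsParent f) hv).not_ge hle
    simp [parentMatrix, hv, huw]

lemma det_one_sub_parentMatrix_of_not_wellFounded (hf : ¬WellFounded (IsParent f)) :
    (1 - parentMatrix R f).det = 0 := by
  obtain ⟨u, hu⟩ : ∃ u, ¬Acc (IsParent f) u := by
    by_contra! h
    exact hf ⟨h⟩
  let x (v : V) : R := if Acc (IsParent f) v then 0 else 1
  have hker : (1 - parentMatrix R f) *ᵥ x = 0 := by
    rw [sub_mulVec, one_mulVec, sub_eq_zero]
    funext v
    rw [parentMatrix_mulVec_apply]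
    cases hv : f v with
    | none => exact if_pos (acc_isParent_of_eq_none hv)
    | some w => simp only [x, IsParent.acc_iff hv, Option.elim_some]
  refine det_eq_zero_of_mulVec_eq_zero_of_mem_nonZeroDivisors hker (i := u) ?_
  simp [x, hu]

end ParentMatrix

section Laplacian

variable {V : Type*} [Fintype V] [DecidableEq V] (G : SimpleGraph V) [DecidableRel G.Adj] (r : V)

/-- The parent functions with sole root `r` in which every parent is a neighbour in `G`. They may
contain cycles, in which case they do not come from a spanning tree. -/
def parentMaps : Finset (V → Option V) :=
  Fintype.piFinset fun v => if v = r then {none} else (G.neighborFinset v).map .some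

variable {G r} in
lemma mem_parentMaps {f : V → Option V} :
    f ∈ parentMaps G r ↔ (∀ v, f v = none ↔ v = r) ∧ ∀ v w, IsParent f w v → G.Adj v w := by
  rw [parentMaps, Fintype.mem_piFinset, ← forall_and]
  refine forall_congr' fun v => ?_
  obtain rfl | hv := eq_or_ne v r
  · cases hfv : f v <;> simp [IsParent, hfv]
  · cases hfv : f v <;> simp [IsParent, hfv, hv]

lemma card_filter_wellFounded_parentMaps :
    #{f ∈ parentMaps G r | WellFounded (IsParent f)} =
      #{T : SimpleGraph V | T ≤ G ∧ T.IsTree} := by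
  refine card_bij (fun f _ => parentGraph f) (fun f hf => ?_) (fun f hf g hg h => ?_)
    (fun T hT => ?_)
  · obtain ⟨hfG, hwf⟩ := mem_filter.1 hf
    obtain ⟨hroot, hadj⟩ := mem_parentMaps.1 hfG
    exact mem_filter_univ _ |>.2 ⟨parentGraph_le hadj, isTree_parentGraph hwf hroot⟩
  · obtain ⟨hfG, hwf⟩ := mem_filter.1 hf
    have hroot := (mem_parentMaps.1 hfG).1
    have hroot' := (mem_parentMaps.1 (mem_filter.1 hg).1).1
    exact eq_of_parentGraph_eq hwf (fun v hv => (hroot' v).2 ((hroot v).1 hv)) h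
  · obtain ⟨hTG, hT⟩ := mem_filter_univ _ |>.1 hT
    obtain ⟨f, hwf, hroot, rfl⟩ := exists_parentGraph_eq_of_isTree hT r
    exact ⟨f, mem_filter.2 ⟨mem_parentMaps.2 ⟨hroot, fun _ _ h => hTG (h.adj hwf)⟩, hwf⟩, rfl⟩

lemma lapMatrix_row_eq_sum (R : Type*) [AddCommGroupWithOne R] (v : V) :
    G.lapMatrix R v = ∑ w ∈ G.neighborFinset v, (Pi.single v 1 - Pi.single w 1) := by
  ext u
  simp [SimpleGraph.lapMatrix, SimpleGraph.degMatrix, diagonal_apply, Pi.single_apply, eq_comm]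

variable (R : Type*) [CommRing R]

lemma det_updateRow_lapMatrix_eq_sum :
    ((G.lapMatrix R).updateRow r (Pi.single r 1)).det =
      ∑ f ∈ parentMaps G r, (1 - parentMatrix R f).det := by
  let row (v : V) (o : Option V) : V → R := Pi.single v 1 - o.elim 0 (Pi.single · 1)
  have hrow (v : V) : (G.lapMatrix R).updateRow r (Pi.single r 1) v =
      ∑ o ∈ if v = r then {none} else (G.neighborFinset v).map .some, row v o := by
    obtain rfl | hv := eq_or_ne v r
    · simp [row]
    · simp [row, hv, lapMatrix_row_eq_sum]
  have hterm (f : V → Option V) : 1 - parentMatrix R f = fun v => row v (f v) := by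
    ext v w
    simp [row, parentMatrix, one_apply, Pi.single_apply, eq_comm]
  simp only [hterm]
  exact (congrArg det (funext hrow)).trans
    ((detRowAlternating (n := V) (R := R)).toMultilinearMap.map_sum_finset row _)

theorem matrix_tree_theorem_graph_general (i j : V) :
    (G.lapMatrix R).adjugate i j = #{T : SimpleGraph V | T ≤ G ∧ T.IsTree} := by
  have hterm (f : V → Option V) :
      (1 - parentMatrix R f).det = if WellFounded (IsParent f) then 1 else 0 := by
    split_ifs with hf
    · exact det_one_sub_parentMatrix_of_wellFounded hf
    · exact det_one_sub_parentMatrix_of_not_wellFounded hf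
  calc (G.lapMatrix R).adjugate i j
      = (G.lapMatrix R).adjugate j j :=
        adjugate_apply_eq_of_mulVec_one_eq_zero G.lapMatrix_mulVec_const_eq_zero i j j
    _ = ∑ f ∈ parentMaps G j, (1 - parentMatrix R f).det := by
        rw [adjugate_apply, det_updateRow_lapMatrix_eq_sum]
    _ = #{f ∈ parentMaps G j | WellFounded (IsParent f)} := by
        simp only [hterm, sum_boole]
    _ = #{T : SimpleGraph V | T ≤ G ∧ T.IsTree} := by
        rw [card_filter_wellFounded_parentMaps]

end Laplacian

/-- Matrix-Tree theorem for graphs: the number of spanning trees of a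
finite simple graph `G` (subgraphs of `G` on the full vertex set that are trees) equals
the absolute value of any cofactor of `L = A - D`. -/
theorem matrix_tree_theorem_graph {n : ℕ} (G : SimpleGraph (Fin (n + 1)))
    [DecidableRel G.Adj]
    (L : Matrix (Fin (n + 1)) (Fin (n + 1)) ℝ)
    (hL : L = G.adjMatrix ℝ - Matrix.diagonal (fun i => (G.degree i : ℝ))) :
    ∀ i j,
      ((Finset.univ.filter
          (fun τ : SimpleGraph (Fin (n + 1)) => τ ≤ G ∧ τ.IsTree)).card : ℝ) =
        |cofactor L i j| := by
  intro i j
  have hneg : L = (-1 : ℝ) • G.lapMatrix ℝ := by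
    rw [hL, neg_one_smul, SimpleGraph.lapMatrix, SimpleGraph.degMatrix, neg_sub]
  rw [cofactor_eq_adjugate, hneg, adjugate_smul, Matrix.smul_apply,
    matrix_tree_theorem_graph_general]
  simp [abs_mul]
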